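/- Let ψ be uniformly distributed on the unit sphere of C^d and let Δ be Hermitian. For every integer q ≥ 1, E[(tr(Δ |ψ⟩⟨ψ|))^{2q}] ≤ ((2q)! / d^{2q}) · (tr(Δ²) + (tr Δ)²)^q, and consequently (E[(d·|⟨ψ|Δ|ψ⟩|)^{2q}])^{1/(2q)} ≤ 2q · sqrt(tr(Δ²) + (tr Δ)²). -/

import Mathlib

open Matrix BigOperators MeasureTheory

/-!
In an eigenbasis of the operator, with eigenvalues `λᵢ`, the quadratic form is `∑ λᵢ |ψᵢ|²`.
Invariance under diagonal unitaries annihilates the mixed moments of the coordinates `ψᵢ`, while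
invariance under all unitaries makes `E |∑ xᵢ ψᵢ|²ⁿ` proportional to `(∑ xᵢ²)ⁿ`. Comparing
coefficients, `E ∏ |ψᵢ|^(2 aᵢ)` is inversely proportional to the multinomial coefficient of `a`, so
`E (∑ λᵢ |ψᵢ|²)ⁿ = hₙ(λ) / hₙ(1, …, 1)` with `hₙ` the complete homogeneous symmetric polynomial.
Here `hₙ(1, …, 1) = (d + n - 1).choose n ≥ dⁿ / n!`. For `B² = ∑ λᵢ² + (∑ λᵢ)²` the power sums
satisfy `|pₖ(λ)| ≤ Bᵏ`, and Newton's recursion for `hₙ` turns this into `|hₙ(λ)| ≤ Bⁿ`.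
-/

section CompleteHomogeneous

open Finset MvPolynomial PowerSeries

theorem pow_le_factorial_mul_multichoose (d n : ℕ) :
    d ^ n ≤ n.factorial * d.multichoose n := by
  obtain _ | n := n
  · simp
  obtain _ | d := d
  · simp
  calc (d + 1) ^ (n + 1) ≤ (d + 1).ascFactorial (n + 1) := Nat.pow_succ_le_ascFactorial _ _
    _ = (n + 1).factorial * (d + 1).multichoose (n + 1) := by
      rw [Nat.ascFactorial_eq_factorial_mul_choose', Nat.multichoose_eq]

theorem derivation_prod {ι R A : Type*} [CommSemiring R] [CommSemiring A] [Algebra R A]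
    (D : Derivation R A A) {s : Finset ι} {f g : ι → A} (h : ∀ i ∈ s, D (f i) = f i * g i) :
    D (∏ i ∈ s, f i) = (∏ i ∈ s, f i) * ∑ i ∈ s, g i := by
  induction s using Finset.cons_induction with
  | empty => simp
  | cons i s hi ih =>
    rw [prod_cons, sum_cons, D.leibniz, ih fun j hj => h j (mem_cons_of_mem hj),
      h i (mem_cons_self i s)]
    simp only [smul_eq_mul]
    ring

theorem derivative_mk_pow {R : Type*} [CommSemiring R] (r : R) :
    d⁄dX R (PowerSeries.mk (r ^ ·)) = PowerSeries.mk (r ^ ·) * PowerSeries.mk (r ^ · * r) := by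
  ext n
  calc PowerSeries.coeff n (d⁄dX R (PowerSeries.mk (r ^ ·)))
      = ∑ _ ∈ antidiagonal n, r ^ (n + 1) := by
        simp [PowerSeries.coeff_derivative, mul_comm]
    _ = PowerSeries.coeff n (PowerSeries.mk (r ^ ·) * PowerSeries.mk (r ^ · * r)) := by
        rw [PowerSeries.coeff_mul]
        refine sum_congr rfl fun p hp => ?_
        rw [PowerSeries.coeff_mk, PowerSeries.coeff_mk, ← HasAntidiagonal.mem_antidiagonal.1 hp]
        ring

variable {σ : Type*} [Fintype σ]

theorem eq_of_forall_sum_mul_prod_pow_eq {R : Type*} [CommRing R] [IsDomain R] {T : Set R}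
    (hT : T.Infinite) {s : Finset (σ →₀ ℕ)} {u v : (σ →₀ ℕ) → R}
    (h : ∀ t : σ → R, (∀ i, t i ∈ T) →
      ∑ a ∈ s, u a * ∏ i, t i ^ a i = ∑ a ∈ s, v a * ∏ i, t i ^ a i)
    {a : σ →₀ ℕ} (ha : a ∈ s) : u a = v a := by
  classical
  have hp : ∑ a ∈ s, MvPolynomial.monomial a (u a) = ∑ a ∈ s, MvPolynomial.monomial a (v a) :=
    funext_set (fun _ => T) (fun _ => hT) fun t ht => by
      simpa [eval_monomial, Finsupp.prod_fintype] using h t fun i => ht i trivial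
  simpa [MvPolynomial.coeff_sum, MvPolynomial.coeff_monomial, ha]
    using congrArg (MvPolynomial.coeff a) hp

theorem abs_eval_psum_le (l : σ → ℝ) {k : ℕ} (hk : k ≠ 0) :
    |eval l (psum σ ℝ k)| ≤ √(∑ i, l i ^ 2 + (∑ i, l i) ^ 2) ^ k := by
  have hsum : 0 ≤ ∑ i, l i ^ 2 := sum_nonneg fun i _ => sq_nonneg _
  set S := ∑ i, l i ^ 2 + (∑ i, l i) ^ 2
  have hsumS : ∑ i, l i ^ 2 ≤ S := le_add_of_nonneg_right (sq_nonneg _)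
  have hl (i : σ) : |l i| ≤ √S := Real.abs_le_sqrt <|
    (single_le_sum (f := (l · ^ 2)) (fun j _ => sq_nonneg _) (mem_univ i)).trans hsumS
  simp only [psum, map_sum, map_pow, eval_X]
  obtain _ | _ | k := k
  · contradiction
  · simpa using Real.abs_le_sqrt (le_add_of_nonneg_left hsum)
  · calc |∑ i, l i ^ (k + 2)| ≤ ∑ i, |l i ^ (k + 2)| := abs_sum_le_sum_abs _ _
      _ = ∑ i, |l i| ^ k * l i ^ 2 := by simp only [pow_add, abs_mul, abs_pow, sq_abs]
      _ ≤ ∑ i, √S ^ k * l i ^ 2 := by gcongr with i; exact hl i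
      _ = √S ^ k * ∑ i, l i ^ 2 := by rw [mul_sum]
      _ ≤ √S ^ k * √S ^ 2 := by rw [Real.sq_sqrt (hsum.trans hsumS)]; gcongr
      _ = √S ^ (k + 2) := (pow_add _ _ _).symm

variable [DecidableEq σ]

theorem sum_pow_eq_sum_finsuppAntidiag {R : Type*} [CommSemiring R] (x : σ → R) (n : ℕ) :
    (∑ i, x i) ^ n =
      ∑ a ∈ univ.finsuppAntidiag n, (Nat.multinomial univ a : R) * ∏ i, x i ^ a i := by
  rw [sum_pow_eq_sum_piAntidiag]
  exact (sum_equiv Finsupp.equivFunOnFinite (by simp) fun _ _ => rfl).symm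

theorem hsymm_eq_sum_monomial (R : Type*) [CommSemiring R] (n : ℕ) :
    hsymm σ R n = ∑ a ∈ univ.finsuppAntidiag n, MvPolynomial.monomial a 1 := by
  rw [← Finset.sum_coe_sort, hsymm]
  refine Fintype.sum_equiv ((Sym.equivNatSum σ n).trans
    (Equiv.subtypeEquivRight fun a => by simp [Finsupp.sum_fintype])) _ _ fun s => ?_
  have hs : s.1 = Finsupp.toMultiset (Sym.equivNatSum σ n s : σ →₀ ℕ) := by
    rw [← Sym.coe_equivNatSum_symm_apply, Equiv.symm_apply_apply]
    rfl
  rw [hs, Finsupp.toMultiset_map, Finsupp.prod_toMultiset,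
    Finsupp.prod_mapDomain_index (by simp) (by simp [pow_add]), monomial_eq, map_one, one_mul]
  rfl

theorem eval_hsymm {R : Type*} [CommSemiring R] (x : σ → R) (n : ℕ) :
    eval x (hsymm σ R n) = ∑ a ∈ univ.finsuppAntidiag n, ∏ i, x i ^ a i := by
  simp [hsymm_eq_sum_monomial, eval_monomial, Finsupp.prod_fintype]

theorem eval_one_hsymm (R : Type*) [CommSemiring R] (n : ℕ) :
    eval 1 (hsymm σ R n) = (Fintype.card σ).multichoose n := by
  simp [eval_hsymm, card_finsuppAntidiag_nat_eq_multichoose]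

theorem mk_hsymm (R : Type*) [CommSemiring R] :
    PowerSeries.mk (hsymm σ R) = ∏ i, PowerSeries.mk (MvPolynomial.X i ^ ·) := by
  ext1 n
  simp [PowerSeries.coeff_prod, hsymm_eq_sum_monomial, monomial_eq, Finsupp.prod_fintype]

theorem derivative_mk_hsymm (R : Type*) [CommSemiring R] :
    d⁄dX _ (PowerSeries.mk (hsymm σ R)) =
      PowerSeries.mk (hsymm σ R) * PowerSeries.mk fun n => psum σ R (n + 1) := by
  rw [mk_hsymm, derivation_prod _ fun i _ => derivative_mk_pow (MvPolynomial.X i)]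
  congr 1
  ext1 n
  simp [psum, pow_succ]

theorem succ_mul_hsymm_succ (R : Type*) [CommSemiring R] (n : ℕ) :
    ((n + 1 : ℕ) : MvPolynomial σ R) * hsymm σ R (n + 1) =
      ∑ p ∈ antidiagonal n, hsymm σ R p.1 * psum σ R (p.2 + 1) := by
  have h := congrArg (PowerSeries.coeff n) (derivative_mk_hsymm (σ := σ) R)
  simpa only [PowerSeries.coeff_derivative, PowerSeries.coeff_mul, PowerSeries.coeff_mk, mul_comm,
    Nat.cast_succ] using h

theorem abs_eval_hsymm_le_of_forall_psum {l : σ → ℝ} {B : ℝ}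
    (h : ∀ k ≠ 0, |eval l (psum σ ℝ k)| ≤ B ^ k) (n : ℕ) : |eval l (hsymm σ ℝ n)| ≤ B ^ n := by
  induction n using Nat.strong_induction_on with
  | _ n ih =>
    obtain _ | n := n
    · simp
    have hnewton := congrArg (eval l) (succ_mul_hsymm_succ (σ := σ) ℝ n)
    simp only [map_mul, map_natCast, map_sum] at hnewton
    refine le_of_mul_le_mul_left ?_ (Nat.cast_pos (α := ℝ).2 n.succ_pos)
    calc ((n + 1 : ℕ) : ℝ) * |eval l (hsymm σ ℝ (n + 1))|
        = |∑ p ∈ antidiagonal n, eval l (hsymm σ ℝ p.1) * eval l (psum σ ℝ (p.2 + 1))| := by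
          rw [← hnewton, abs_mul, Nat.abs_cast]
      _ ≤ ∑ _ ∈ antidiagonal n, B ^ (n + 1) := by
          refine (abs_sum_le_sum_abs _ _).trans (sum_le_sum fun p hp => ?_)
          rw [HasAntidiagonal.mem_antidiagonal] at hp
          have hp1 := ih p.1 (by lia)
          rw [abs_mul, ← hp, add_assoc, pow_add]
          exact mul_le_mul hp1 (h _ p.2.succ_ne_zero) (abs_nonneg _) ((abs_nonneg _).trans hp1)
      _ = ((n + 1 : ℕ) : ℝ) * B ^ (n + 1) := by simp

theorem abs_eval_hsymm_le (l : σ → ℝ) (n : ℕ) :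
    |eval l (hsymm σ ℝ n)| ≤ √(∑ i, l i ^ 2 + (∑ i, l i) ^ 2) ^ n :=
  abs_eval_hsymm_le_of_forall_psum (fun _ => abs_eval_psum_le l) n

end CompleteHomogeneous

open scoped InnerProductSpace

open Module (finrank)

theorem exists_unitary_pow_ne_pow {m n : ℕ} (h : m ≠ n) : ∃ w : unitary ℂ, w ^ m ≠ w ^ n := by
  have hz := Complex.isPrimitiveRoot_exp (m + n + 1) (Nat.succ_ne_zero _)
  have hz1 := hz.norm'_eq_one (by lia)
  refine ⟨⟨_, Unitary.mem_iff_self_mul_star.2 ?_⟩,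
    fun hw => h (hz.pow_inj (by lia) (by lia) (congrArg Subtype.val hw))⟩
  rw [RCLike.star_def, RCLike.mul_conj, hz1]
  simp

theorem integral_norm_sum_sq_of_orthogonal {𝕜 Ω κ : Type*} [RCLike 𝕜] [MeasurableSpace Ω]
    {μ : Measure Ω} {s : Finset κ} {F : κ → Ω → 𝕜}
    (hF : ∀ i ∈ s, ∀ j ∈ s, Integrable (fun ω => F i ω * starRingEnd 𝕜 (F j ω)) μ)
    (h : ∀ i ∈ s, ∀ j ∈ s, i ≠ j → ∫ ω, F i ω * starRingEnd 𝕜 (F j ω) ∂μ = 0) :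
    ∫ ω, ‖∑ i ∈ s, F i ω‖ ^ 2 ∂μ = ∑ i ∈ s, ∫ ω, ‖F i ω‖ ^ 2 ∂μ := by
  apply RCLike.ofReal_injective (K := 𝕜)
  simp only [map_sum, ← integral_ofReal, map_pow, ← RCLike.mul_conj, Finset.sum_mul_sum]
  rw [integral_finsetSum _ fun i hi => integrable_finsetSum _ (hF i hi)]
  refine Finset.sum_congr rfl fun i hi => ?_
  rw [integral_finsetSum _ (hF i hi)]
  exact Finset.sum_eq_single_of_mem i hi fun j hj hji => h i hi j hj hji.symm

section InnerProductSpace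

variable {𝕜 V : Type*} [RCLike 𝕜] [NormedAddCommGroup V] [InnerProductSpace 𝕜 V]

theorem exists_linearIsometryEquiv_repr_eq_mul {ι : Type*} [Fintype ι]
    (b : OrthonormalBasis ι 𝕜 V) (w : ι → unitary 𝕜) :
    ∃ L : V ≃ₗᵢ[𝕜] V, ∀ x i, b.repr (L x) i = w i * b.repr x i :=
  ⟨(b.repr.trans (.piLpCongrRight 2 fun i => w i • .refl 𝕜 𝕜)).trans b.repr.symm,
    fun x i => by simp⟩

variable [FiniteDimensional 𝕜 V]

theorem exists_linearIsometryEquiv_apply_eq_of_norm_eq_one {x y : V} (hx : ‖x‖ = 1)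
    (hy : ‖y‖ = 1) : ∃ L : V ≃ₗᵢ[𝕜] V, L x = y := by
  let e := LinearIsometryEquiv.toSpanUnitSingleton (𝕜 := 𝕜) x hx
  let L := (LinearIsometry.toSpanSingleton 𝕜 V hy).comp e.symm.toLinearIsometry
  refine ⟨L.extend.toLinearIsometryEquiv rfl, ?_⟩
  calc L.extend x = L.extend (e 1 : V) := by simp [e]
    _ = L (e 1) := L.extend_apply _
    _ = y := by simp [L]

theorem exists_linearIsometryEquiv_apply_eq {x y : V} (h : ‖x‖ = ‖y‖) :
    ∃ L : V ≃ₗᵢ[𝕜] V, L x = y := by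
  obtain rfl | hx := eq_or_ne x 0
  · exact ⟨.refl 𝕜 V, by simpa [eq_comm] using h⟩
  have hy : y ≠ 0 := norm_ne_zero_iff.1 (h ▸ norm_ne_zero_iff.2 hx)
  obtain ⟨L, hL⟩ := exists_linearIsometryEquiv_apply_eq_of_norm_eq_one (𝕜 := 𝕜)
    (norm_smul_inv_norm (𝕜 := 𝕜) hx) (norm_smul_inv_norm (𝕜 := 𝕜) hy)
  have hc : (‖x‖⁻¹ : 𝕜) ≠ 0 := by simpa using hx
  exact ⟨L, by simpa only [map_smul, h, smul_right_inj (h ▸ hc)] using hL⟩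

variable {T : V →ₗ[𝕜] V} (hT : T.IsSymmetric) {d : ℕ} (hd : finrank 𝕜 V = d)

theorem re_inner_apply_eq_sum_eigenvalues (x : V) :
    RCLike.re ⟪x, T x⟫_𝕜 =
      ∑ i, hT.eigenvalues hd i * ‖(hT.eigenvectorBasis hd).repr x i‖ ^ 2 := by
  rw [← (hT.eigenvectorBasis hd).repr.inner_map_map, PiLp.inner_apply, map_sum]
  refine Finset.sum_congr rfl fun i _ => ?_
  rw [hT.eigenvectorBasis_apply_self_apply, RCLike.inner_apply, mul_assoc, RCLike.mul_conj]
  norm_cast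

theorem re_trace_comp_self_eq_sum_eigenvalues_sq :
    RCLike.re (LinearMap.trace 𝕜 V (T ∘ₗ T)) = ∑ i, hT.eigenvalues hd i ^ 2 := by
  rw [LinearMap.trace_eq_sum_inner _ (hT.eigenvectorBasis hd), map_sum]
  refine Finset.sum_congr rfl fun i _ => ?_
  simp [hT.apply_eigenvectorBasis, inner_smul_right, sq]

end InnerProductSpace

section UniformOnSphere

variable {E : Type*} [NormedAddCommGroup E] [InnerProductSpace ℂ E] [MeasurableSpace E]

/-- The measure `μ` is carried by the unit sphere of the complex inner product space `E` and is
invariant under every unitary of `E`. For a probability measure on a finite-dimensional space this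
characterizes the uniform distribution on the sphere. -/
structure IsUniformOnSphere (μ : Measure E) : Prop where
  norm_eq_one : ∀ᵐ ψ ∂μ, ‖ψ‖ = 1
  map_linearIsometryEquiv (L : E ≃ₗᵢ[ℂ] E) : μ.map L = μ

namespace IsUniformOnSphere

open Finset

variable {μ : Measure E}

section Invariance

variable [BorelSpace E]

theorem integral_comp_linearIsometryEquiv {F : Type*} [NormedAddCommGroup F] [NormedSpace ℝ F]
    (hμ : IsUniformOnSphere μ) (L : E ≃ₗᵢ[ℂ] E) (g : E → F) :
    ∫ ψ, g (L ψ) ∂μ = ∫ ψ, g ψ ∂μ := by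
  conv_rhs => rw [← hμ.map_linearIsometryEquiv L]
  exact (L.toHomeomorph.measurableEmbedding.integral_map g).symm

theorem integral_prod_repr_pow_mul_conj_eq_zero {ι : Type*} [Fintype ι]
    (b : OrthonormalBasis ι ℂ E) (hμ : IsUniformOnSphere μ) {r s : ι → ℕ} (h : r ≠ s) :
    ∫ ψ, (∏ i, b.repr ψ i ^ r i) * starRingEnd ℂ (∏ i, b.repr ψ i ^ s i) ∂μ = 0 := by
  classical
  obtain ⟨i, hi⟩ := Function.ne_iff.1 h
  obtain ⟨w, hw⟩ := exists_unitary_pow_ne_pow hi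
  obtain ⟨L, hL⟩ := exists_linearIsometryEquiv_repr_eq_mul b (Pi.mulSingle i w)
  have hLprod (t : ι → ℕ) (ψ : E) :
      ∏ j, b.repr (L ψ) j ^ t j = (w ^ t i : unitary ℂ) * ∏ j, b.repr ψ j ^ t j := by
    simp only [hL, mul_pow, prod_mul_distrib]
    rw [Fintype.prod_eq_single i fun j hj => by simp [hj]]
    simp
  have hI := hμ.integral_comp_linearIsometryEquiv L
    fun ψ => (∏ i, b.repr ψ i ^ r i) * starRingEnd ℂ (∏ i, b.repr ψ i ^ s i)
  simp only [hLprod, map_mul, mul_mul_mul_comm _ _ (starRingEnd ℂ _), integral_const_mul] at hI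
  refine by_contra fun h0 => hw (mul_inv_eq_one.1 (Subtype.ext ?_))
  exact (mul_eq_right₀ h0).1 hI

theorem integral_norm_inner_pow [FiniteDimensional ℂ E] (hμ : IsUniformOnSphere μ) {e : E}
    (he : ‖e‖ = 1) (x : E) (k : ℕ) :
    ∫ ψ, ‖⟪x, ψ⟫_ℂ‖ ^ k ∂μ = ‖x‖ ^ k * ∫ ψ, ‖⟪e, ψ⟫_ℂ‖ ^ k ∂μ := by
  obtain ⟨L, hL⟩ : ∃ L : E ≃ₗᵢ[ℂ] E, L ((‖x‖ : ℂ) • e) = x :=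
    exists_linearIsometryEquiv_apply_eq (by simp [norm_smul, he])
  calc ∫ ψ, ‖⟪x, ψ⟫_ℂ‖ ^ k ∂μ = ∫ ψ, ‖⟪L ((‖x‖ : ℂ) • e), L ψ⟫_ℂ‖ ^ k ∂μ := by
        rw [hL, hμ.integral_comp_linearIsometryEquiv L fun ψ => ‖⟪x, ψ⟫_ℂ‖ ^ k]
    _ = ‖x‖ ^ k * ∫ ψ, ‖⟪e, ψ⟫_ℂ‖ ^ k ∂μ := by
        simp only [L.inner_map_map, inner_smul_left, norm_mul, mul_pow, integral_const_mul,
          RCLike.norm_conj, Complex.norm_real, norm_norm]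

theorem integral_norm_sum_mul_repr_pow_eq_mul [FiniteDimensional ℂ E] {ι : Type*} [Fintype ι]
    (b : OrthonormalBasis ι ℂ E) (hμ : IsUniformOnSphere μ) {e : E} (he : ‖e‖ = 1) (x : ι → ℝ)
    (n : ℕ) :
    ∫ ψ, ‖∑ i, x i * b.repr ψ i‖ ^ (2 * n) ∂μ =
      (∑ i, x i ^ 2) ^ n * ∫ ψ, ‖⟪e, ψ⟫_ℂ‖ ^ (2 * n) ∂μ := by
  have h := hμ.integral_norm_inner_pow he (b.repr.symm (WithLp.toLp 2 fun i => (x i : ℂ))) (2 * n)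
  rw [LinearIsometryEquiv.norm_map, pow_mul, EuclideanSpace.norm_sq_eq] at h
  simpa [LinearIsometryEquiv.inner_map_eq_flip, PiLp.inner_apply, mul_comm] using h

end Invariance

section Moments

variable [BorelSpace E] [FiniteDimensional ℂ E]

theorem integrable_of_continuous [IsFiniteMeasure μ] {F : Type*} [NormedAddCommGroup F]
    (hμ : IsUniformOnSphere μ) {g : E → F} (hg : Continuous g) : Integrable g μ := by
  have : ProperSpace E := FiniteDimensional.proper_rclike ℂ E
  obtain ⟨C, hC⟩ := (isCompact_sphere (0 : E) 1).exists_bound_of_continuousOn hg.continuousOn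
  exact .of_bound hg.aestronglyMeasurable C
    (hμ.norm_eq_one.mono fun ψ hψ => hC ψ (mem_sphere_zero_iff_norm.2 hψ))

variable {ι : Type*} [Fintype ι] [DecidableEq ι] (b : OrthonormalBasis ι ℂ E)

theorem integral_norm_sum_mul_repr_pow_eq_sum [IsFiniteMeasure μ] (hμ : IsUniformOnSphere μ)
    (x : ι → ℝ) (n : ℕ) :
    ∫ ψ, ‖∑ i, x i * b.repr ψ i‖ ^ (2 * n) ∂μ =
      ∑ a ∈ univ.finsuppAntidiag n, (Nat.multinomial univ a : ℝ) ^ 2 *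
        (∫ ψ, ∏ i, (‖b.repr ψ i‖ ^ 2) ^ a i ∂μ) * ∏ i, (x i ^ 2) ^ a i := by
  let F (a : ι →₀ ℕ) (ψ : E) : ℂ := Nat.multinomial univ a * ∏ i, (x i * b.repr ψ i) ^ a i
  have hF (a : ι →₀ ℕ) : Continuous (F a) := by fun_prop
  have hint (a a' : ι →₀ ℕ) : Integrable (fun ψ => F a ψ * starRingEnd ℂ (F a' ψ)) μ :=
    hμ.integrable_of_continuous ((hF a).mul (Complex.continuous_conj.comp (hF a')))
  have hconj (a a' : ι →₀ ℕ) (ψ : E) : F a ψ * starRingEnd ℂ (F a' ψ) =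
      Nat.multinomial univ a * (∏ i, (x i : ℂ) ^ a i) *
        (Nat.multinomial univ a' * ∏ i, (x i : ℂ) ^ a' i) *
          ((∏ i, b.repr ψ i ^ a i) * starRingEnd ℂ (∏ i, b.repr ψ i ^ a' i)) := by
    simp only [F, mul_pow, prod_mul_distrib, map_mul, map_prod, map_pow, map_natCast,
      Complex.conj_ofReal]
    ring
  have horth (a a' : ι →₀ ℕ) (h : a ≠ a') : ∫ ψ, F a ψ * starRingEnd ℂ (F a' ψ) ∂μ = 0 := by
    simp only [hconj, integral_const_mul,
      hμ.integral_prod_repr_pow_mul_conj_eq_zero b (DFunLike.coe_injective.ne h), mul_zero]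
  calc ∫ ψ, ‖∑ i, x i * b.repr ψ i‖ ^ (2 * n) ∂μ
      = ∫ ψ, ‖∑ a ∈ univ.finsuppAntidiag n, F a ψ‖ ^ 2 ∂μ := by
        simp only [F, ← sum_pow_eq_sum_finsuppAntidiag, norm_pow, ← pow_mul, mul_comm]
    _ = ∑ a ∈ univ.finsuppAntidiag n, ∫ ψ, ‖F a ψ‖ ^ 2 ∂μ :=
        integral_norm_sum_sq_of_orthogonal (fun a _ a' _ => hint a a') fun a _ a' _ => horth a a'
    _ = _ := by
        refine sum_congr rfl fun a _ => ?_
        rw [← integral_const_mul, ← integral_mul_const]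
        congr with ψ
        simp only [F, norm_mul, Complex.norm_natCast, norm_prod, norm_pow, Complex.norm_real,
          Real.norm_eq_abs, mul_pow, prod_mul_distrib, ← prod_pow, pow_right_comm _ _ 2, sq_abs]
        ring

theorem multinomial_mul_integral_prod [IsFiniteMeasure μ] (hμ : IsUniformOnSphere μ) {e : E}
    (he : ‖e‖ = 1) {n : ℕ} {a : ι →₀ ℕ} (ha : a ∈ univ.finsuppAntidiag n) :
    Nat.multinomial univ a * ∫ ψ, ∏ i, (‖b.repr ψ i‖ ^ 2) ^ a i ∂μ =
      ∫ ψ, ‖⟪e, ψ⟫_ℂ‖ ^ (2 * n) ∂μ := by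
  have hcoeff : (Nat.multinomial univ a : ℝ) ^ 2 * ∫ ψ, ∏ i, (‖b.repr ψ i‖ ^ 2) ^ a i ∂μ =
      Nat.multinomial univ a * ∫ ψ, ‖⟪e, ψ⟫_ℂ‖ ^ (2 * n) ∂μ := by
    refine eq_of_forall_sum_mul_prod_pow_eq (Set.Ici_infinite (0 : ℝ))
      (u := fun a => (Nat.multinomial univ a : ℝ) ^ 2 * ∫ ψ, ∏ i, (‖b.repr ψ i‖ ^ 2) ^ a i ∂μ)
      (v := fun a => Nat.multinomial univ a * ∫ ψ, ‖⟪e, ψ⟫_ℂ‖ ^ (2 * n) ∂μ) (fun t ht => ?_) ha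
    have h := (hμ.integral_norm_sum_mul_repr_pow_eq_sum b (fun i => √(t i)) n).symm.trans
      (hμ.integral_norm_sum_mul_repr_pow_eq_mul b he _ n)
    simp only [Real.sq_sqrt (ht _), sum_pow_eq_sum_finsuppAntidiag t, sum_mul] at h
    simpa only [mul_right_comm] using h
  have hm : (Nat.multinomial univ a : ℝ) ≠ 0 := Nat.cast_ne_zero.2 (Nat.multinomial_pos _ _).ne'
  exact mul_left_cancel₀ hm (by rwa [← mul_assoc, ← sq])

theorem integral_sum_mul_norm_sq_pow [IsFiniteMeasure μ] (hμ : IsUniformOnSphere μ) {e : E}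
    (he : ‖e‖ = 1) (l : ι → ℝ) (n : ℕ) :
    ∫ ψ, (∑ i, l i * ‖b.repr ψ i‖ ^ 2) ^ n ∂μ =
      (MvPolynomial.hsymm ι ℝ n).eval l * ∫ ψ, ‖⟪e, ψ⟫_ℂ‖ ^ (2 * n) ∂μ := by
  have hint (a : ι →₀ ℕ) : Integrable (fun ψ => ∏ i, (‖b.repr ψ i‖ ^ 2) ^ a i) μ :=
    hμ.integrable_of_continuous (by fun_prop)
  calc ∫ ψ, (∑ i, l i * ‖b.repr ψ i‖ ^ 2) ^ n ∂μ
      = ∫ ψ, ∑ a ∈ univ.finsuppAntidiag n, (∏ i, l i ^ a i) *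
          (Nat.multinomial univ a * ∏ i, (‖b.repr ψ i‖ ^ 2) ^ a i) ∂μ := by
        simp only [sum_pow_eq_sum_finsuppAntidiag, mul_pow, prod_mul_distrib, mul_left_comm]
    _ = ∑ a ∈ univ.finsuppAntidiag n, (∏ i, l i ^ a i) *
          (Nat.multinomial univ a * ∫ ψ, ∏ i, (‖b.repr ψ i‖ ^ 2) ^ a i ∂μ) := by
        rw [integral_finsetSum _ fun a _ => ((hint a).const_mul _).const_mul _]
        simp only [integral_const_mul]
    _ = ∑ a ∈ univ.finsuppAntidiag n, (∏ i, l i ^ a i) * ∫ ψ, ‖⟪e, ψ⟫_ℂ‖ ^ (2 * n) ∂μ :=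
        sum_congr rfl fun a ha => by rw [hμ.multinomial_mul_integral_prod b he ha]
    _ = _ := by rw [eval_hsymm, sum_mul]

end Moments

section IsProbabilityMeasure

variable [IsProbabilityMeasure μ]

theorem exists_norm_eq_one (hμ : IsUniformOnSphere μ) : ∃ e : E, ‖e‖ = 1 :=
  hμ.norm_eq_one.exists

variable [FiniteDimensional ℂ E]

theorem finrank_pos (hμ : IsUniformOnSphere μ) : 0 < finrank ℂ E := by
  obtain ⟨e, he⟩ := hμ.exists_norm_eq_one
  exact Module.finrank_pos_iff_exists_ne_zero.2 ⟨e, norm_ne_zero_iff.1 (he ▸ one_ne_zero)⟩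

variable [BorelSpace E]

theorem integral_sum_mul_norm_sq_pow_mul_multichoose {ι : Type*} [Fintype ι] [DecidableEq ι]
    (b : OrthonormalBasis ι ℂ E) (hμ : IsUniformOnSphere μ) (l : ι → ℝ) (n : ℕ) :
    (∫ ψ, (∑ i, l i * ‖b.repr ψ i‖ ^ 2) ^ n ∂μ) * (Fintype.card ι).multichoose n =
      (MvPolynomial.hsymm ι ℝ n).eval l := by
  obtain ⟨e, he⟩ := hμ.exists_norm_eq_one
  have hmoment := hμ.integral_sum_mul_norm_sq_pow b he (n := n)
  have hsum : ∀ᵐ ψ ∂μ, (∑ i, (1 : ι → ℝ) i * ‖b.repr ψ i‖ ^ 2) ^ n = 1 := by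
    filter_upwards [hμ.norm_eq_one] with ψ hψ
    simp [← EuclideanSpace.norm_sq_eq, hψ]
  have hone : ((Fintype.card ι).multichoose n : ℝ) * ∫ ψ, ‖⟪e, ψ⟫_ℂ‖ ^ (2 * n) ∂μ = 1 := by
    rw [← eval_one_hsymm, ← hmoment, integral_congr_ae hsum]
    simp
  rw [hmoment, mul_assoc, mul_comm (integral _ _), hone, mul_one]

theorem abs_integral_re_inner_pow_le {T : E →ₗ[ℂ] E} (hμ : IsUniformOnSphere μ)
    (hT : T.IsSymmetric) (n : ℕ) :
    |∫ ψ, (⟪ψ, T ψ⟫_ℂ).re ^ n ∂μ| ≤ n.factorial / (finrank ℂ E : ℝ) ^ n *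
      √((LinearMap.trace ℂ E (T ∘ₗ T)).re + (LinearMap.trace ℂ E T).re ^ 2) ^ n := by
  let b := hT.eigenvectorBasis rfl
  let l := hT.eigenvalues rfl
  have hform (ψ : E) : (⟪ψ, T ψ⟫_ℂ).re = ∑ i, l i * ‖b.repr ψ i‖ ^ 2 :=
    re_inner_apply_eq_sum_eigenvalues hT rfl ψ
  have htrace : (LinearMap.trace ℂ E T).re = ∑ i, l i := hT.re_trace_eq_sum_eigenvalues rfl
  have htrace_sq : (LinearMap.trace ℂ E (T ∘ₗ T)).re = ∑ i, l i ^ 2 :=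
    re_trace_comp_self_eq_sum_eigenvalues_sq hT rfl
  have hmoment := congrArg abs (hμ.integral_sum_mul_norm_sq_pow_mul_multichoose b l n)
  rw [abs_mul, Nat.abs_cast, Fintype.card_fin] at hmoment
  have hcard : (finrank ℂ E : ℝ) ^ n ≤ n.factorial * (finrank ℂ E).multichoose n :=
    mod_cast pow_le_factorial_mul_multichoose _ _
  have hd : (0 : ℝ) < finrank ℂ E := Nat.cast_pos.2 hμ.finrank_pos
  simp only [hform, htrace, htrace_sq]
  rw [div_mul_eq_mul_div, le_div_iff₀ (pow_pos hd n)]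
  set I := ∫ ψ, (∑ i, l i * ‖b.repr ψ i‖ ^ 2) ^ n ∂μ
  calc |I| * (finrank ℂ E : ℝ) ^ n ≤ |I| * (n.factorial * (finrank ℂ E).multichoose n) := by
        gcongr
    _ = n.factorial * |(MvPolynomial.hsymm _ ℝ n).eval l| := by rw [← hmoment, mul_left_comm]
    _ ≤ n.factorial * √(∑ i, l i ^ 2 + (∑ i, l i) ^ 2) ^ n := by
        gcongr
        exact abs_eval_hsymm_le l n

end IsProbabilityMeasure

end IsUniformOnSphere

theorem stmt10_general [BorelSpace E] [FiniteDimensional ℂ E] {μ : Measure E}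
    [IsProbabilityMeasure μ] (hμ : IsUniformOnSphere μ) {T : E →ₗ[ℂ] E} (hT : T.IsSymmetric)
    {q : ℕ} (hq : 1 ≤ q) :
    ∫ ψ, (⟪ψ, T ψ⟫_ℂ).re ^ (2 * q) ∂μ ≤ (2 * q).factorial / (finrank ℂ E : ℝ) ^ (2 * q) *
        ((LinearMap.trace ℂ E (T ∘ₗ T)).re + (LinearMap.trace ℂ E T).re ^ 2) ^ q ∧
      (∫ ψ, (finrank ℂ E * |(⟪ψ, T ψ⟫_ℂ).re|) ^ (2 * q) ∂μ) ^ ((1 : ℝ) / (2 * q)) ≤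
        2 * q * √((LinearMap.trace ℂ E (T ∘ₗ T)).re + (LinearMap.trace ℂ E T).re ^ 2) := by
  have hbound := (le_abs_self _).trans (hμ.abs_integral_re_inner_pow_le hT (2 * q))
  have htrace_sq : 0 ≤ (LinearMap.trace ℂ E (T ∘ₗ T)).re :=
    (Finset.sum_nonneg fun i _ => sq_nonneg _).trans_eq
      (re_trace_comp_self_eq_sum_eigenvalues_sq hT rfl).symm
  set S := (LinearMap.trace ℂ E (T ∘ₗ T)).re + (LinearMap.trace ℂ E T).re ^ 2
  have hS : 0 ≤ S := by positivity
  have hd : (0 : ℝ) < finrank ℂ E := Nat.cast_pos.2 hμ.finrank_pos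
  refine ⟨by rwa [pow_mul √S, Real.sq_sqrt hS] at hbound, ?_⟩
  rw [one_div, Real.rpow_inv_le_iff_of_pos (integral_nonneg fun ψ => by positivity)
    (by positivity) (by positivity)]
  calc ∫ ψ, (finrank ℂ E * |(⟪ψ, T ψ⟫_ℂ).re|) ^ (2 * q) ∂μ
      = (finrank ℂ E : ℝ) ^ (2 * q) * ∫ ψ, (⟪ψ, T ψ⟫_ℂ).re ^ (2 * q) ∂μ := by
        simp only [mul_pow, integral_const_mul, (even_two_mul q).pow_abs]
    _ ≤ (finrank ℂ E : ℝ) ^ (2 * q) *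
          ((2 * q).factorial / (finrank ℂ E : ℝ) ^ (2 * q) * √S ^ (2 * q)) := by gcongr
    _ = (2 * q).factorial * √S ^ (2 * q) := by field_simp
    _ ≤ ((2 * q : ℕ) : ℝ) ^ (2 * q) * √S ^ (2 * q) := by
        gcongr
        exact mod_cast Nat.factorial_le_pow (2 * q)
    _ = (2 * q * √S) ^ (2 * q : ℝ) := by
        rw [← mul_pow, ← Real.rpow_natCast]
        push_cast
        rfl

end UniformOnSphere

section Matrix

variable {n : Type*} [Fintype n] [DecidableEq n]

theorem isUniformOnSphere_of_unitaryGroup [MeasurableSpace (EuclideanSpace ℂ n)]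
    [BorelSpace (EuclideanSpace ℂ n)] {μ : Measure (EuclideanSpace ℂ n)} [IsProbabilityMeasure μ]
    (hsphere : μ (Metric.sphere 0 1) = 1)
    (hinv : ∀ U ∈ unitaryGroup n ℂ, μ.map (toEuclideanLin U) = μ) : IsUniformOnSphere μ where
  norm_eq_one := by
    rw [← mem_ae_iff_prob_eq_one Metric.isClosed_sphere.measurableSet] at hsphere
    exact Filter.mem_of_superset hsphere fun ψ => mem_sphere_zero_iff_norm.1
  map_linearIsometryEquiv L := by
    let u := Unitary.linearIsometryEquiv.symm L
    let U := (toEuclideanCLM (n := n) (𝕜 := ℂ)).symm u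
    have hU : U ∈ unitaryGroup n ℂ := Unitary.map_mem (toEuclideanCLM (n := n) (𝕜 := ℂ)).symm u.2
    have hL : ⇑(toEuclideanLin U) = L := by
      rw [← coe_toEuclideanCLM_eq_toEuclideanLin, StarAlgEquiv.apply_symm_apply]
      rfl
    exact hL ▸ hinv U hU

theorem trace_toEuclideanLin {𝕜 : Type*} [RCLike 𝕜] (A : Matrix n n 𝕜) :
    LinearMap.trace 𝕜 _ (toEuclideanLin A) = A.trace := by
  rw [toEuclideanLin_eq_toLin_orthonormal, trace_toLin_eq]

theorem inner_toEuclideanLin {𝕜 : Type*} [RCLike 𝕜] (A : Matrix n n 𝕜) (x : EuclideanSpace 𝕜 n) :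
    ⟪x, toEuclideanLin A x⟫_𝕜 = ∑ i, ∑ j, starRingEnd 𝕜 (x i) * A i j * x j := by
  simp only [PiLp.inner_apply, ofLp_toLpLin, toLin'_apply, mulVec, dotProduct,
    RCLike.inner_apply', Finset.mul_sum, mul_assoc]

end Matrix

/-- For `ψ` uniform on the unit sphere of `ℂ^d` (formalized: a probability measure carried by
the unit sphere and invariant under every unitary) and Hermitian `Δ`, for every `q ≥ 1`,
`E[(tr(Δ|ψ⟩⟨ψ|))^{2q}] ≤ (2q)!/d^{2q} · (tr Δ² + (tr Δ)²)^q`, and consequently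
`(E[(d|⟨ψ|Δ|ψ⟩|)^{2q}])^{1/(2q)} ≤ 2q·√(tr Δ² + (tr Δ)²)`. -/
theorem stmt10 (d : ℕ) [MeasurableSpace (EuclideanSpace ℂ (Fin d))]
    [BorelSpace (EuclideanSpace ℂ (Fin d))] (μ : Measure (EuclideanSpace ℂ (Fin d))) [IsProbabilityMeasure μ]
    (hsphere : μ (Metric.sphere (0 : EuclideanSpace ℂ (Fin d)) 1) = 1)
    (hinv : ∀ U ∈ Matrix.unitaryGroup (Fin d) ℂ,
      Measure.map (fun x : EuclideanSpace ℂ (Fin d) =>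
        (EuclideanSpace.equiv (Fin d) ℂ).symm
          (Matrix.mulVec U ((EuclideanSpace.equiv (Fin d) ℂ) x))) μ = μ)
    (Δ : Matrix (Fin d) (Fin d) ℂ) (hΔ : Δ.IsHermitian)
    (q : ℕ) (hq : 1 ≤ q)
    (f : EuclideanSpace ℂ (Fin d) → ℝ)
    (hf : ∀ ψ, f ψ = (∑ i, ∑ j, (starRingEnd ℂ) (ψ i) * Δ i j * ψ j).re) :
    (∫ ψ, f ψ ^ (2 * q) ∂μ) ≤
        ((2 * q).factorial : ℝ) / (d : ℝ) ^ (2 * q) *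
          ((Matrix.trace (Δ * Δ)).re + ((Matrix.trace Δ).re) ^ 2) ^ q ∧
      (∫ ψ, ((d : ℝ) * |f ψ|) ^ (2 * q) ∂μ) ^ ((1 : ℝ) / (2 * q)) ≤
        2 * q * Real.sqrt ((Matrix.trace (Δ * Δ)).re + ((Matrix.trace Δ).re) ^ 2) := by
  obtain rfl : f = fun ψ => (⟪ψ, toEuclideanLin Δ ψ⟫_ℂ).re := by
    simpa only [inner_toEuclideanLin] using funext hf
  simpa only [← toLpLin_mul_same, trace_toEuclideanLin, finrank_euclideanSpace_fin] using
    stmt10_general (isUniformOnSphere_of_unitaryGroup hsphere hinv)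
      (isSymmetric_toEuclideanLin_iff.2 hΔ) hq
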